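/- Let (A, I) be a Henselian pair and let B be an A-algebra which is hfp over A with respect to I. Then the map A → B is h-formally smooth if and only if for every integer r ≥ 1 the induced ring map A/I^r → B/(I^r·B) is smooth (smooth = formally smooth and of finite presentation). -/

import Mathlib

universe u

/-- A ring homomorphism `ρ : R →+* H` exhibits `H` as a Henselization of the pair `(R, K)`:
`(H, K·H)` is a Henselian pair, and every map from `(R, K)` to a Henselian pair factors
uniquely through `ρ`. -/
def IsHenselization {R H : Type u} [CommRing R] [CommRing H]
    (K : Ideal R) (ρ : R →+* H) : Prop :=
  HenselianRing H (K.map ρ) ∧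
    ∀ (C : Type u) [CommRing C] (J : Ideal C), HenselianRing C J →
      ∀ f : R →+* C, K.map f ≤ J → ∃! g : H →+* C, g.comp ρ = f

/-- `φ : A →+* B` is Henselian finitely presented (hfp) with respect to `I`:
`B` is a Henselization of `(R, I·R)` for some finitely presented `A`-algebra `R`. -/
def IsHfp {A B : Type u} [CommRing A] [CommRing B] (φ : A →+* B) (I : Ideal A) : Prop :=
  ∃ (R : Type u) (_ : CommRing R) (ψ : A →+* R) (ρ : R →+* B),
    ψ.FinitePresentation ∧ ρ.comp ψ = φ ∧ IsHenselization (I.map ψ) ρ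

/-- `φ : A →+* B` is h-formally étale with respect to `I`. -/
def IsHFormallyEtale {A B : Type u} [CommRing A] [CommRing B] (φ : A →+* B) (I : Ideal A) :
    Prop :=
  ∀ (E C : Type u) [CommRing E] [CommRing C] (e : A →+* E) (c : A →+* C)
    (p : E →+* C) (u : B →+* C),
    p.comp e = c → u.comp φ = c →
    (∃ N : ℕ, 1 ≤ N ∧ Ideal.map e (I ^ N) = ⊥ ∧ Ideal.map c (I ^ N) = ⊥) →
    Function.Surjective p →
    (∃ M : ℕ, 1 ≤ M ∧ RingHom.ker p ^ M = ⊥) →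
    ∃! v : B →+* E, v.comp φ = e ∧ p.comp v = u

/-- `φ : A →+* B` is h-formally smooth with respect to `I`. -/
def IsHFormallySmooth {A B : Type u} [CommRing A] [CommRing B] (φ : A →+* B) (I : Ideal A) :
    Prop :=
  ∀ (E C : Type u) [CommRing E] [CommRing C] (e : A →+* E) (c : A →+* C)
    (p : E →+* C) (u : B →+* C),
    p.comp e = c → u.comp φ = c →
    (∃ N : ℕ, 1 ≤ N ∧ Ideal.map e (I ^ N) = ⊥ ∧ Ideal.map c (I ^ N) = ⊥) →
    Function.Surjective p →
    (∃ M : ℕ, 1 ≤ M ∧ RingHom.ker p ^ M = ⊥) →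
    ∃ v : B →+* E, v.comp φ = e ∧ p.comp v = u

/-- `φ : A →+* B` is h-étale with respect to `I`: `B` is a Henselization of `(R, I·R)`
for some étale `A`-algebra `R`. -/
def IsHEtale {A B : Type u} [CommRing A] [CommRing B] (φ : A →+* B) (I : Ideal A) : Prop :=
  ∃ (R : Type u) (_ : CommRing R) (_ : Algebra A R) (ρ : R →+* B),
    Algebra.Etale A R ∧ ρ.comp (algebraMap A R) = φ ∧
      IsHenselization (I.map (algebraMap A R)) ρ

/-- `φ : A →+* B` is h-smooth with respect to `I`: `B` is a Henselization of `(R, I·R)`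
for some smooth `A`-algebra `R`. -/
def IsHSmooth {A B : Type u} [CommRing A] [CommRing B] (φ : A →+* B) (I : Ideal A) : Prop :=
  ∃ (R : Type u) (_ : CommRing R) (_ : Algebra A R) (ρ : R →+* B),
    Algebra.Smooth A R ∧ ρ.comp (algebraMap A R) = φ ∧
      IsHenselization (I.map (algebraMap A R)) ρ

/-- A ring homomorphism is flat if it makes the target into a flat module over the source. -/
def RingHomFlat {A C : Type u} [CommRing A] [CommRing C] (f : A →+* C) : Prop :=
  letI := f.toAlgebra
  Module.Flat A C

/-- A ring homomorphism is smooth if it makes the target into a smooth algebra over the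
source (smooth = formally smooth + finitely presented). -/
def RingHomSmooth {A C : Type u} [CommRing A] [CommRing C] (f : A →+* C) : Prop :=
  letI := f.toAlgebra
  Algebra.Smooth A C

/-- A ring homomorphism is étale if it makes the target into an étale algebra over the
source (étale = formally étale + finitely presented). -/
def RingHomEtale {A C : Type u} [CommRing A] [CommRing C] (f : A →+* C) : Prop :=
  letI := f.toAlgebra
  Algebra.Etale A C

theorem henselianRing_of_pow_eq_bot {R : Type u} [CommRing R] (I : Ideal R) (n : ℕ)
    (h : I ^ n = ⊥) : HenselianRing R I := by
  have hn : ∀ m, n ≤ m → I ^ m = ⊥ := fun m hm =>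
    le_bot_iff.1 ((Ideal.pow_le_pow_right hm).trans h.le)
  have : IsAdicComplete I R :=
    { haus' := fun x hx => by
        have := hx n
        rw [h, SModEq.zero] at this
        simpa using this
      prec' := fun f hf => by
        refine ⟨f n, fun m => ?_⟩
        rcases le_total m n with hm | hm
        · exact hf hm
        · have := hf hm
          rw [h] at this
          rw [hn m hm]
          exact this.symm }
  infer_instance

theorem henselianRing_quot {A R : Type u} [CommRing A] [CommRing R] (ψ : A →+* R) (I : Ideal A)
    (r : ℕ) :
    HenselianRing (R ⧸ (I ^ r).map ψ) ((I.map ψ).map (Ideal.Quotient.mk ((I ^ r).map ψ))) := by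
  apply henselianRing_of_pow_eq_bot _ r
  rw [← Ideal.map_pow, ← Ideal.map_pow, Ideal.map_quotient_self]

theorem finitePresentation_quotientMap {A R : Type u} [CommRing A] [CommRing R] (ψ : A →+* R)
    (hψ : ψ.FinitePresentation) (J : Ideal A) :
    (Ideal.quotientMap (J.map ψ) ψ Ideal.le_comap_map).FinitePresentation := by
  algebraize [ψ]
  let e := Algebra.TensorProduct.quotIdealMapEquivQuotTensor R J
  have h1 : (algebraMap (A ⧸ J) (TensorProduct A (A ⧸ J) R)).FinitePresentation := by
    rw [RingHom.finitePresentation_algebraMap]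
    infer_instance
  have h2 : (RingHomClass.toRingHom e.symm).FinitePresentation :=
    RingHom.FinitePresentation.of_bijective e.symm.bijective
  change (Ideal.quotientMap (J.map (algebraMap A R)) (algebraMap A R)
    Ideal.le_comap_map).FinitePresentation
  convert h2.comp h1 using 1
  apply Ideal.Quotient.ringHom_ext
  ext a
  have := e.symm.commutes (Ideal.Quotient.mk J a)
  exact this.symm

theorem isHFormallySmooth_iff_smooth_mod_powers
    {A B : Type u} [CommRing A] [CommRing B] [Algebra A B]
    (I : Ideal A) [HenselianRing A I]
    (hhfp : IsHfp (algebraMap A B) I) :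
    IsHFormallySmooth (algebraMap A B) I ↔
      ∀ r : ℕ, 1 ≤ r →
        RingHomSmooth (Ideal.quotientMap ((I ^ r).map (algebraMap A B)) (algebraMap A B)
          Ideal.le_comap_map) := by
  constructor
  · intro hs r hr
    have hfp : (Ideal.quotientMap ((I ^ r).map (algebraMap A B)) (algebraMap A B)
        Ideal.le_comap_map).FinitePresentation := by
      obtain ⟨R, _, ψ, ρ, hψ, hρ, -, huniv⟩ := hhfp
      have hJ : ((I ^ r).map ψ).map ρ = (I ^ r).map (algebraMap A B) := by
        rw [Ideal.map_map, hρ]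
      let ρ' : R ⧸ (I ^ r).map ψ →+* B ⧸ (I ^ r).map (algebraMap A B) :=
        Ideal.quotientMap _ ρ (hJ ▸ Ideal.le_comap_map)
      obtain ⟨g, hg, -⟩ := huniv _ _ (henselianRing_quot ψ I r) (Ideal.Quotient.mk _) le_rfl
      have hcomp : ρ'.comp g = Ideal.Quotient.mk _ := by
        have hH := henselianRing_quot (algebraMap A B) I r
        refine (huniv _ _ hH ((Ideal.Quotient.mk _).comp ρ) ?_).unique ?_ rfl
        · rw [← Ideal.map_map, Ideal.map_map ψ ρ, hρ]
        · rw [RingHom.comp_assoc, hg]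
          ext x
          rfl
      have hbij : Function.Bijective ρ' := by
        constructor
        · rw [injective_iff_map_eq_zero]
          intro x hx
          obtain ⟨x, rfl⟩ := Ideal.Quotient.mk_surjective x
          have hx' : ρ x ∈ ((I ^ r).map ψ).map ρ := by
            rw [hJ]
            exact Ideal.Quotient.eq_zero_iff_mem.1 hx
          have h3 := Ideal.mem_map_of_mem g hx'
          rw [Ideal.map_map, hg, Ideal.map_quotient_self] at h3
          have h4 := RingHom.congr_fun hg x
          rw [← h4]
          exact h3
        · intro y
          obtain ⟨y, rfl⟩ := Ideal.Quotient.mk_surjective y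
          exact ⟨g y, RingHom.congr_fun hcomp y⟩
      convert (RingHom.FinitePresentation.of_bijective hbij).comp
        (finitePresentation_quotientMap ψ hψ (I ^ r)) using 1
      apply Ideal.Quotient.ringHom_ext
      ext a
      simp [ρ', ← hρ]
    unfold RingHomSmooth
    letI alg := (Ideal.quotientMap ((I ^ r).map (algebraMap A B)) (algebraMap A B)
          Ideal.le_comap_map).toAlgebra
    refine @Algebra.Smooth.mk _ _ _ _ alg ?_ hfp
    refine Algebra.FormallySmooth.of_comp_surjective ?_
    intro E _ _ K hK f
    let e : A →+* E := (algebraMap (A ⧸ I ^ r) E).comp (Ideal.Quotient.mk _)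
    let p := Ideal.Quotient.mk K
    let w : B →+* E ⧸ K := f.toRingHom.comp (Ideal.Quotient.mk _)
    have he : Ideal.map e (I ^ r) = ⊥ := by
      rw [← Ideal.map_map, Ideal.map_quotient_self, Ideal.map_bot]
    obtain ⟨v, hv1, hv2⟩ := hs E (E ⧸ K) e (p.comp e) p w rfl (by
        ext a
        exact f.commutes (Ideal.Quotient.mk _ a))
      ⟨r, hr, he, by rw [← Ideal.map_map, he, Ideal.map_bot]⟩ Ideal.Quotient.mk_surjective
      ⟨2, by norm_num, by rw [Ideal.mk_ker, hK]⟩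
    have hv : (I ^ r).map (algebraMap A B) ≤ RingHom.ker v := by
      rw [← Ideal.map_eq_bot_iff_le_ker, Ideal.map_map, hv1, he]
    refine ⟨{ Ideal.Quotient.lift _ v hv with
      commutes' := fun a => ?_ }, ?_⟩
    · obtain ⟨a, rfl⟩ := Ideal.Quotient.mk_surjective a
      exact RingHom.congr_fun hv1 a
    · ext b
      obtain ⟨b, rfl⟩ := Ideal.Quotient.mk_surjective b
      exact RingHom.congr_fun hv2 b
  · rintro hs E C _ _ e c p w hpe hwc ⟨N, hN, heN, hcN⟩ hp ⟨M, hM, hM'⟩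
    have hsN := hs N hN
    unfold RingHomSmooth at hsN
    letI alg := (Ideal.quotientMap ((I ^ N).map (algebraMap A B)) (algebraMap A B)
          Ideal.le_comap_map).toAlgebra
    let e' : A ⧸ I ^ N →+* E := Ideal.Quotient.lift _ e ((Ideal.map_eq_bot_iff_le_ker _).1 heN)
    let c' : A ⧸ I ^ N →+* C := Ideal.Quotient.lift _ c ((Ideal.map_eq_bot_iff_le_ker _).1 hcN)
    letI := e'.toAlgebra
    letI := c'.toAlgebra
    have hw : (I ^ N).map (algebraMap A B) ≤ RingHom.ker w := by
      rw [← Ideal.map_eq_bot_iff_le_ker, Ideal.map_map, hwc, hcN]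
    let w' : (B ⧸ (I ^ N).map (algebraMap A B)) →ₐ[A ⧸ I ^ N] C :=
      { Ideal.Quotient.lift _ w hw with
        commutes' := fun a => by
          obtain ⟨a, rfl⟩ := Ideal.Quotient.mk_surjective a
          exact RingHom.congr_fun hwc a }
    let p' : E →ₐ[A ⧸ I ^ N] C :=
      { p with
        commutes' := fun a => by
          obtain ⟨a, rfl⟩ := Ideal.Quotient.mk_surjective a
          exact RingHom.congr_fun hpe a }
    have hfs : Algebra.FormallySmooth (A ⧸ I ^ N) (B ⧸ (I ^ N).map (algebraMap A B)) :=
      hsN.formallySmooth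
    let v' := Algebra.FormallySmooth.liftOfSurjective w' p' hp ⟨M, hM'⟩
    refine ⟨v'.toRingHom.comp (Ideal.Quotient.mk _), ?_, ?_⟩
    · ext a
      exact v'.commutes (Ideal.Quotient.mk _ a)
    · ext b
      exact Algebra.FormallySmooth.liftOfSurjective_apply w' p' hp ⟨M, hM'⟩
        (Ideal.Quotient.mk _ b)
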